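/- arXiv:2602.07599 — 2 statements merged into one kernel-verified Lean document; each statement's English description precedes it below -/
import Mathlib

section
/- Let d be even, let θ : Fin (d/2) → ℝ be a family of frequencies, and let R ∈ ℝ^{d×d} be the block-diagonal matrix whose i-th 2×2 diagonal block is the rotation matrix R_{θ_i} = [[cos θ_i, −sin θ_i],[sin θ_i, cos θ_i]]. Let α ∈ ℝ^d be the vector with α_{2i−1} = 1 and α_{2i} = 0 for every block i. Then for every t ∈ ℕ, the vector h_t = R^t α satisfies h_{t,2i−1} = cos(t·θ_i) and h_{t,2i} = sin(t·θ_i) for every i. Consequently the standard sinusoidal positional encodings are exactly the state sequence of a weighted finite automaton whose transition matrix is the input-independent matrix R. -/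
open Matrix Real

/-- Sinusoidal/rotary positional encodings are exactly the state sequence of a
WFA with input-independent block-diagonal rotation transition matrix `R`.
We realize the even dimension `d = 2*n` via the index type `Fin n × Fin 2`,
where block `i` consists of coordinates `(i, 0)` (odd position `2i−1`) and `(i, 1)`
(even position `2i`). -/
theorem stmt0 (n : ℕ) (θ : Fin n → ℝ)
    (R : Matrix (Fin n × Fin 2) (Fin n × Fin 2) ℝ)
    (hR : ∀ (i j : Fin n) (a b : Fin 2),
      R (i, a) (j, b) =
        if i = j then
          (!![Real.cos (θ i), -Real.sin (θ i); Real.sin (θ i), Real.cos (θ i)]) a b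
        else 0)
    (α : Fin n × Fin 2 → ℝ)
    (hα : ∀ i : Fin n, α (i, 0) = 1 ∧ α (i, 1) = 0) :
    (∀ (t : ℕ) (i : Fin n),
        ((R ^ t) *ᵥ α) (i, 0) = Real.cos (t * θ i) ∧
        ((R ^ t) *ᵥ α) (i, 1) = Real.sin (t * θ i)) ∧
    (∀ (A : Type) (x : List A),
        x.foldl (fun v _ => R *ᵥ v) α = (R ^ x.length) *ᵥ α) := by
  have step : ∀ (v : Fin n × Fin 2 → ℝ) (i : Fin n),
      (R *ᵥ v) (i, 0) = Real.cos (θ i) * v (i, 0) - Real.sin (θ i) * v (i, 1) ∧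
      (R *ᵥ v) (i, 1) = Real.sin (θ i) * v (i, 0) + Real.cos (θ i) * v (i, 1) := by
    intro v i
    constructor
    · simp [Matrix.mulVec, dotProduct, Fintype.sum_prod_type, hR, Finset.sum_add_distrib]
      ring
    · simp [Matrix.mulVec, dotProduct, Fintype.sum_prod_type, hR, Finset.sum_add_distrib]
  constructor
  · intro t
    induction t with
    | zero => intro i; simpa using hα i
    | succ t ih =>
      intro i
      obtain ⟨h0, h1⟩ := step ((R ^ t) *ᵥ α) i
      obtain ⟨i0, i1⟩ := ih i
      rw [pow_succ', ← Matrix.mulVec_mulVec, h0, h1, i0, i1]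
      push_cast
      rw [add_mul, one_mul, Real.cos_add, Real.sin_add]
      constructor <;> ring
  · intro A x
    clear hα step
    induction x generalizing α with
    | nil => simp
    | cons a x ih =>
      rw [List.foldl_cons, ih, List.length_cons, pow_succ, Matrix.mulVec_mulVec]
end

section
/- Let M : ℝ^{d_in} → ℝ^{d×d} be an encoding of continuous input embeddings into transition matrices such that ‖M(u)‖₂ ≤ γ < 1 for all u and ‖M(u) − M(u')‖₂ ≤ K_M ‖u − u'‖₂ for all u, u' (Lipschitz continuity of the encoding). Let x = (x_1,…,x_T) and x' = (x'_1,…,x'_T) be two input sequences in ℝ^{d_in}, and let h_t = M(x_t) h_{t−1}, h'_t = M(x'_t) h'_{t−1} with common initial state h_0 = h'_0 = α. Let R be a bound with ‖h'_t‖₂ ≤ R for all t (one may take R = ‖α‖₂). Then ‖h_T − h'_T‖₂ ≤ Σ_{t=1}^T K_M R γ^{T−t} ‖x_t − x'_t‖₂ ≤ (K_M R/(1 − γ)) · sup_{1 ≤ t ≤ T} ‖x_t − x'_t‖₂. In particular the map from input sequences to the final state is Lipschitz with a constant independent of the sequence length T. -/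
open Matrix

/-- The Euclidean (ℓ²) norm of a finitely-indexed real vector. -/
noncomputable def vecNorm {n : Type*} [Fintype n] (v : n → ℝ) : ℝ :=
  ‖(WithLp.equiv 2 (n → ℝ)).symm v‖

/-- The ℓ²→ℓ² operator norm (spectral norm) of a real matrix. -/
noncomputable def matNorm {m n : Type*} [Fintype m] [Fintype n] [DecidableEq n]
    (M : Matrix m n ℝ) : ℝ :=
  ‖LinearMap.toContinuousLinearMap (Matrix.toEuclideanLin M)‖

theorem vecNorm_nonneg' {n : Type*} [Fintype n] (v : n → ℝ) : 0 ≤ vecNorm v := norm_nonneg _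

theorem matNorm_nonneg' {m n : Type*} [Fintype m] [Fintype n] [DecidableEq n]
    (A : Matrix m n ℝ) : 0 ≤ matNorm A := norm_nonneg _

theorem vecNorm_add_le' {n : Type*} [Fintype n] (v w : n → ℝ) :
    vecNorm (v + w) ≤ vecNorm v + vecNorm w :=
  norm_add_le ((WithLp.equiv 2 (n → ℝ)).symm v) ((WithLp.equiv 2 (n → ℝ)).symm w)

theorem vecNorm_mulVec_le {m n : Type*} [Fintype m] [Fintype n] [DecidableEq n]
    (A : Matrix m n ℝ) (v : n → ℝ) : vecNorm (A *ᵥ v) ≤ matNorm A * vecNorm v :=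
  (LinearMap.toContinuousLinearMap (Matrix.toEuclideanLin A)).le_opNorm
    ((WithLp.equiv 2 (n → ℝ)).symm v)

theorem sum_rec (c γ : ℝ) (f : ℕ → ℝ) (n : ℕ) :
    ∑ t ∈ Finset.Icc 1 (n + 1), c * γ ^ (n + 1 - t) * f t =
      γ * (∑ t ∈ Finset.Icc 1 n, c * γ ^ (n - t) * f t) + c * f (n + 1) := by
  rw [Finset.sum_Icc_succ_top (by omega), Finset.mul_sum]
  congr 1
  · refine Finset.sum_congr rfl fun t ht => ?_
    rw [Finset.mem_Icc] at ht
    rw [Nat.succ_sub ht.2, pow_succ]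
    ring
  · simp

theorem sum_bound (c γ S : ℝ) (f : ℕ → ℝ) (hγ0 : 0 ≤ γ) (hγ1 : γ < 1) (hc : 0 ≤ c)
    (hS : 0 ≤ S) (n : ℕ) (hf : ∀ t ∈ Finset.Icc 1 n, f t ≤ S) :
    ∑ t ∈ Finset.Icc 1 n, c * γ ^ (n - t) * f t ≤ c / (1 - γ) * S := by
  have h1 : 0 < 1 - γ := by linarith
  induction n with
  | zero => simp; positivity
  | succ n ih =>
    rw [sum_rec]
    have ih' := ih fun t ht => hf t (by simp at ht ⊢; omega)
    have h2 := hf (n + 1) (by simp)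
    calc _ ≤ γ * (c / (1 - γ) * S) + c * S := by gcongr
      _ = _ := by field_simp; ring

/-- Lipschitz input stability. If the encoding `u ↦ M(u)` is contractive
(`‖M(u)‖₂ ≤ γ < 1`) and `K_M`-Lipschitz, the two trajectories `h_t = M(x_t) h_{t−1}` and
`h'_t = M(x'_t) h'_{t−1}` start from the common state `α`, and `‖h'_t‖₂ ≤ R` for all
`t ≤ T`, then
`‖h_T − h'_T‖₂ ≤ Σ_{t=1}^T K_M R γ^{T−t} ‖x_t − x'_t‖₂
  ≤ (K_M R / (1−γ)) · sup_{1 ≤ t ≤ T} ‖x_t − x'_t‖₂`. -/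
theorem stmt12 (din d : ℕ) (γ KM R : ℝ) (hγ1 : γ < 1)
    (M : (Fin din → ℝ) → Matrix (Fin d) (Fin d) ℝ)
    (hMc : ∀ u : Fin din → ℝ, matNorm (M u) ≤ γ)
    (hML : ∀ u u' : Fin din → ℝ, matNorm (M u - M u') ≤ KM * vecNorm (u - u'))
    (T : ℕ) (x x' : ℕ → Fin din → ℝ) (α : Fin d → ℝ)
    (h h' : ℕ → Fin d → ℝ)
    (h0 : h 0 = α) (h0' : h' 0 = α)
    (hrec : ∀ t < T, h (t + 1) = M (x (t + 1)) *ᵥ h t)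
    (hrec' : ∀ t < T, h' (t + 1) = M (x' (t + 1)) *ᵥ h' t)
    (hR : ∀ t ≤ T, vecNorm (h' t) ≤ R) :
    vecNorm (h T - h' T) ≤
      ∑ t ∈ Finset.Icc 1 T, KM * R * γ ^ (T - t) * vecNorm (x t - x' t) ∧
    ∑ t ∈ Finset.Icc 1 T, KM * R * γ ^ (T - t) * vecNorm (x t - x' t) ≤
      (KM * R / (1 - γ)) * ⨆ t ∈ Finset.Icc 1 T, vecNorm (x t - x' t) := by
  have hγ0 : 0 ≤ γ := (matNorm_nonneg' _).trans (hMc 0)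
  have hR0 : 0 ≤ R := (vecNorm_nonneg' _).trans (hR 0 (Nat.zero_le _))
  constructor
  · have key : ∀ n ≤ T, vecNorm (h n - h' n) ≤
        ∑ t ∈ Finset.Icc 1 n, KM * R * γ ^ (n - t) * vecNorm (x t - x' t) := by
      intro n
      induction n with
      | zero => intro _; simp [h0, h0', vecNorm]
      | succ n ih =>
        intro hn
        rw [sum_rec (KM * R) γ (fun t => vecNorm (x t - x' t)), hrec n (by omega),
          hrec' n (by omega)]
        have e : M (x (n + 1)) *ᵥ h n - M (x' (n + 1)) *ᵥ h' n =
            M (x (n + 1)) *ᵥ (h n - h' n) + (M (x (n + 1)) - M (x' (n + 1))) *ᵥ h' n := by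
          rw [Matrix.mulVec_sub, Matrix.sub_mulVec]; abel
        rw [e]
        refine (vecNorm_add_le' _ _).trans (add_le_add ?_ ?_)
        · exact (vecNorm_mulVec_le _ _).trans
            (mul_le_mul (hMc _) (ih (by omega)) (vecNorm_nonneg' _) hγ0)
        · refine (vecNorm_mulVec_le _ _).trans ((mul_le_mul (hML _ _) (hR n (by omega))
            (vecNorm_nonneg' _) ((matNorm_nonneg' _).trans (hML _ _))).trans_eq ?_)
          ring
    exact key T le_rfl
  · by_cases hK : 0 ≤ KM
    · refine sum_bound (KM * R) γ _ (fun t => vecNorm (x t - x' t)) hγ0 hγ1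
        (mul_nonneg hK hR0) ?_ T ?_
      · exact Real.iSup_nonneg fun t => Real.iSup_nonneg fun _ => vecNorm_nonneg' _
      · intro t ht
        have hb : BddAbove (Set.range fun t => ⨆ (_ : t ∈ Finset.Icc 1 T),
            vecNorm (x t - x' t)) := by
          refine ⟨∑ s ∈ Finset.Icc 1 T, vecNorm (x s - x' s), ?_⟩
          rintro _ ⟨s, rfl⟩
          refine Real.iSup_le (fun hs => ?_) (Finset.sum_nonneg fun _ _ => vecNorm_nonneg' _)
          exact Finset.single_le_sum (f := fun s => vecNorm (x s - x' s))
            (fun _ _ => vecNorm_nonneg' _) hs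
        have := le_ciSup hb t
        rwa [ciSup_pos ht] at this
    · have hz : ∀ t, vecNorm (x t - x' t) = 0 := fun t => by
        have h1 := (matNorm_nonneg' _).trans (hML (x t) (x' t))
        have h2 := vecNorm_nonneg' (x t - x' t)
        nlinarith
      simp [hz]
end
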